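/- arXiv:1906.09368 — 2 statements merged into one kernel-verified Lean document; each statement's English description precedes it below -/
import Mathlib

section
/- For every automorphism θ of the free group F₂ on two generators a, b, there exists an element h ∈ F₂ such that either θ([a,b]) = h⁻¹·[a,b]·h or θ([a,b]) = h⁻¹·[a,b]⁻¹·h; that is, θ sends [a,b] to a conjugate of [a,b] or of [a,b]⁻¹. -/
/-- The free group on two generators. -/
abbrev F₂ : Type := FreeGroup (Fin 2)

/-- The two generators of `F₂`. -/
def genA : F₂ := FreeGroup.of 0
def genB : F₂ := FreeGroup.of 1

/-!
Nielsen reduction. Each Nielsen move on a pair `(u, v)`, and each simultaneous conjugation, replaces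
`[u, v]` by a conjugate of `[u, v]` or of `[u, v]⁻¹`. Among the pairs reachable by such moves from a
generating pair, take one of least total word length. By minimality, no factor of a product of its
letters `u^±1, v^±1` is completely cancelled by its two neighbours, so every such product is at
least as long as its number of letters. As `a` and `b` are products of these letters and have
length one, they are themselves letters, and the minimal pair is `(a, b)` up to swap and inversion.
-/

open FreeGroup
open scoped commutatorElement

section CommonPrefix

variable {β : Type*} [DecidableEq β]

/-- The length of the longest common prefix of two words. For reduced words in a free group it is
the Gromov product in the Cayley tree, based at `1`. -/
def commonPrefixLength : List β → List β → ℕ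
  | [], _ => 0
  | _ :: _, [] => 0
  | x :: l, y :: m => if x = y then commonPrefixLength l m + 1 else 0

theorem commonPrefixLength_comm (l m : List β) :
    commonPrefixLength l m = commonPrefixLength m l := by
  induction l generalizing m with
  | nil => cases m <;> rfl
  | cons x l ih =>
    cases m with
    | nil => rfl
    | cons y m => simp [commonPrefixLength, ih m, eq_comm]

theorem min_commonPrefixLength_le (l m n : List β) :
    min (commonPrefixLength l m) (commonPrefixLength m n) ≤ commonPrefixLength l n := by
  induction l generalizing m n with
  | nil => simp [commonPrefixLength]
  | cons x l ih =>
    cases m with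
    | nil => simp [commonPrefixLength]
    | cons y m =>
      cases n with
      | nil => simp [commonPrefixLength]
      | cons z n => grind [commonPrefixLength]

end CommonPrefix

section Cancellation

variable {α : Type*}

theorem isReduced_invRev_append_of_ne {x y : α × Bool} {l m : List (α × Bool)}
    (hl : IsReduced (x :: l)) (hm : IsReduced (y :: m)) (hxy : x ≠ y) :
    IsReduced (invRev (x :: l) ++ y :: m) := by
  classical
  have hinv : IsReduced (invRev (x :: l)) := by
    rw [isReduced_iff_reduce_eq, reduce_invRev, hl.reduce_eq]
  refine List.isChain_append.2 ⟨hinv, hm, ?_⟩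
  rcases x with ⟨i, b⟩
  rcases y with ⟨j, c⟩
  simp only [invRev, List.map_cons, List.reverse_cons, List.getLast?_concat, List.head?_cons,
    Option.mem_some]
  cases b <;> cases c <;> grind

variable [DecidableEq α]

theorem length_reduce_invRev_append {l m : List (α × Bool)} (hl : IsReduced l)
    (hm : IsReduced m) :
    (reduce (invRev l ++ m)).length + 2 * commonPrefixLength l m = l.length + m.length := by
  induction l generalizing m with
  | nil => simp [commonPrefixLength, hm.reduce_eq]
  | cons x l ih =>
    cases m with
    | nil => simp [commonPrefixLength, reduce_invRev, hl.reduce_eq]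
    | cons y m =>
      by_cases hxy : x = y
      · subst hxy
        have hcancel : reduce (invRev (x :: l) ++ x :: m) = reduce (invRev l ++ m) := by
          apply reduce.sound
          rw [← mul_mk, ← mul_mk, ← inv_mk, ← inv_mk, ← List.singleton_append,
            ← List.singleton_append (l := m), ← mul_mk, ← mul_mk]
          group
        have := ih hl.tail hm.tail
        grind [commonPrefixLength]
      · rw [(isReduced_invRev_append_of_ne hl hm hxy).reduce_eq]
        simp [commonPrefixLength, hxy]

/-- The number of letters of `x`, equivalently of `y`, that cancel in the product `x * y` of
reduced words. -/
def cancellation (x y : FreeGroup α) : ℕ := commonPrefixLength x⁻¹.toWord y.toWord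

theorem norm_mul_add_two_mul_cancellation (x y : FreeGroup α) :
    (x * y).norm + 2 * cancellation x y = x.norm + y.norm := by
  have h := length_reduce_invRev_append (isReduced_toWord (x := x⁻¹)) (isReduced_toWord (x := y))
  rw [← toWord_inv, ← toWord_mul, inv_inv] at h
  rw [← norm_inv_eq (x := x)]
  exact h

theorem cancellation_inv_inv (x y : FreeGroup α) :
    cancellation y⁻¹ x⁻¹ = cancellation x y := by
  rw [cancellation, inv_inv, commonPrefixLength_comm, cancellation]

theorem min_cancellation_le (x y z : FreeGroup α) :
    min (cancellation x y) (cancellation y⁻¹ z) ≤ cancellation x z := by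
  simpa only [cancellation, inv_inv] using
    min_commonPrefixLength_le x⁻¹.toWord y.toWord z.toWord

-- In the tree, the two shortest of three Gromov products agree.
theorem cancellation_eq_of_lt {x y z : FreeGroup α} (h : cancellation x y < cancellation y⁻¹ z) :
    cancellation x z = cancellation x y := by
  have h₁ := min_cancellation_le x y z
  have h₂ := min_cancellation_le x z y
  have h₃ := cancellation_inv_inv y⁻¹ z
  rw [inv_inv] at h₃
  omega

theorem cancellation_inv_mul_add_cancellation (x y : FreeGroup α) :
    cancellation x⁻¹ (x * y) + cancellation x y = x.norm := by
  have h₁ := norm_mul_add_two_mul_cancellation x⁻¹ (x * y)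
  have h₂ := norm_mul_add_two_mul_cancellation x y
  rw [inv_mul_cancel_left, norm_inv_eq] at h₁
  omega

theorem exists_eq_mul_of_le_norm {x : FreeGroup α} {k : ℕ} (hk : k ≤ x.norm) :
    ∃ p q : FreeGroup α, x = p * q ∧ p.norm = k ∧ q.norm = x.norm - k := by
  have hp : IsReduced (x.toWord.take k) := isReduced_toWord.take k
  have hq : IsReduced (x.toWord.drop k) := isReduced_toWord.drop k
  refine ⟨mk (x.toWord.take k), mk (x.toWord.drop k), ?_, ?_, ?_⟩
  · rw [mul_mk, List.take_append_drop, mk_toWord]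
  · simpa [FreeGroup.norm, hp.reduce_eq] using hk
  · simp [FreeGroup.norm, hq.reduce_eq]

theorem norm_lt_norm_mul_self {x : FreeGroup α} (hx : x ≠ 1) : x.norm < (x * x).norm := by
  have hword : (x * x).toWord = reduceCyclically.conjugator x.toWord ++
      (List.replicate 2 (reduceCyclically x.toWord)).flatten ++
        invRev (reduceCyclically.conjugator x.toWord) := by
    rw [← reduceCyclically.reduce_flatten_replicate_succ isReduced_toWord, ← toWord_pow, pow_two]
  have hconj := reduceCyclically.conj_conjugator_reduceCyclically x.toWord
  have hcore : reduceCyclically x.toWord ≠ [] := by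
    intro hnil
    rw [hnil] at hword hconj
    have hsq : x * x = x := toWord_injective (by simpa [hword] using hconj)
    exact hx (mul_eq_left.1 hsq)
  have hpos := List.length_pos_of_ne_nil hcore
  have h₁ := congrArg List.length hword
  have h₂ := congrArg List.length hconj
  simp only [List.replicate, List.flatten_cons, List.flatten_nil, List.append_nil,
    List.length_append, invRev_length] at h₁ h₂
  rw [FreeGroup.norm, FreeGroup.norm]
  omega

theorem two_mul_cancellation_self_lt_norm {x : FreeGroup α} (hx : x ≠ 1) :
    2 * cancellation x x < x.norm := by
  have h₁ := norm_mul_add_two_mul_cancellation x x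
  have h₂ := norm_lt_norm_mul_self hx
  omega

end Cancellation

theorem closure_pair_map_eq_top {G H : Type*} [Group G] [Group H] {f : G →* H}
    (hf : Function.Surjective f) {u v : G} (h : Subgroup.closure {u, v} = ⊤) :
    Subgroup.closure {f u, f v} = ⊤ := by
  rw [← Set.image_pair, ← MonoidHom.map_closure, h, Subgroup.map_top_of_surjective f hf]

theorem exists_reduced_list_of_mem_closure {G : Type*} [Group G] {S : Set G} {x : G}
    (hx : x ∈ Subgroup.closure S) :
    ∃ l : List G, (∀ y ∈ l, y ∈ S ∪ S⁻¹) ∧ l.IsChain (fun y z ↦ y * z ≠ 1) ∧ l.prod = x := by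
  have hcons : ∀ y ∈ S ∪ S⁻¹, ∀ l : List G, (∀ z ∈ l, z ∈ S ∪ S⁻¹) →
      l.IsChain (fun z w ↦ z * w ≠ 1) → ∃ l' : List G, (∀ z ∈ l', z ∈ S ∪ S⁻¹) ∧
        l'.IsChain (fun z w ↦ z * w ≠ 1) ∧ l'.prod = y * l.prod := by
    rintro y hy (_ | ⟨z, l⟩) hl hchain
    · exact ⟨[y], by simpa using hy, by simp, by simp⟩
    · by_cases hyz : y * z = 1
      · refine ⟨l, fun w hw ↦ hl w (List.mem_cons_of_mem z hw), hchain.tail, ?_⟩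
        rw [List.prod_cons, ← mul_assoc, hyz, one_mul]
      · exact ⟨y :: z :: l, List.forall_mem_cons.2 ⟨hy, hl⟩,
          List.isChain_cons_cons.2 ⟨hyz, hchain⟩, List.prod_cons⟩
  induction hx using Subgroup.closure_induction_left with
  | one => exact ⟨[], by simp, by simp, rfl⟩
  | mul_left y hy _ _ ih =>
    obtain ⟨l, hl, hchain, rfl⟩ := ih
    exact hcons y (Or.inl hy) l hl hchain
  | inv_mul_cancel y hy _ _ ih =>
    obtain ⟨l, hl, hchain, rfl⟩ := ih
    exact hcons y⁻¹ (Or.inr (by simpa using hy)) l hl hchain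

section WeaklyNielsenReduced

variable {α : Type*} [DecidableEq α]

/-- The part of Nielsen's reducedness condition on a set `S` in a free group that makes products of
elements of `S ∪ S⁻¹` long: no factor is completely cancelled by its two neighbours. The textbook
condition also asks that at most half of a factor be cancelled by one neighbour. -/
structure IsWeaklyNielsenReduced (S : Set (FreeGroup α)) : Prop where
  one_notMem : 1 ∉ S
  cancellation_add_cancellation_lt : ∀ x ∈ S ∪ S⁻¹, ∀ y ∈ S ∪ S⁻¹, ∀ z ∈ S ∪ S⁻¹,
    x * y ≠ 1 → y * z ≠ 1 → cancellation x y + cancellation y z < y.norm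

namespace IsWeaklyNielsenReduced

variable {S : Set (FreeGroup α)}

theorem mul_self_ne_one (hS : IsWeaklyNielsenReduced S) {x : FreeGroup α} (hx : x ∈ S ∪ S⁻¹) :
    x * x ≠ 1 := by
  rw [← pow_two, ne_eq, sq_eq_one]
  rintro rfl
  exact hS.one_notMem (by simpa using hx)

theorem cancellation_prod (hS : IsWeaklyNielsenReduced S) {x y : FreeGroup α}
    {l : List (FreeGroup α)} (hl : ∀ z ∈ x :: y :: l, z ∈ S ∪ S⁻¹)
    (hchain : (x :: y :: l).IsChain fun z w ↦ z * w ≠ 1) :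
    cancellation x (y :: l).prod = cancellation x y ∧
      cancellation x y + (y :: l).length ≤ (y :: l).prod.norm := by
  induction l generalizing x y with
  | nil =>
    simp only [List.forall_mem_cons, List.isChain_cons_cons] at hl hchain
    have := hS.cancellation_add_cancellation_lt x hl.1 y hl.2.1 y hl.2.1 hchain.1
      (hS.mul_self_ne_one hl.2.1)
    rw [List.prod_singleton, List.length_singleton]
    exact ⟨rfl, by omega⟩
  | cons z l ih =>
    obtain ⟨hcancel, hnorm⟩ := ih (List.forall_mem_cons.1 hl).2 hchain.tail
    simp only [List.forall_mem_cons, List.isChain_cons_cons] at hl hchain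
    rw [List.prod_cons, List.length_cons]
    generalize (z :: l).prod = r at *
    have hlt := hS.cancellation_add_cancellation_lt x hl.1 y hl.2.1 z hl.2.2.1 hchain.1 hchain.2.1
    have hsurvive := cancellation_inv_mul_add_cancellation y r
    have hmul := norm_mul_add_two_mul_cancellation y r
    exact ⟨cancellation_eq_of_lt (by omega), by omega⟩

theorem length_le_norm_prod (hS : IsWeaklyNielsenReduced S) {l : List (FreeGroup α)}
    (hl : ∀ x ∈ l, x ∈ S ∪ S⁻¹) (hchain : l.IsChain fun x y ↦ x * y ≠ 1) :
    l.length ≤ l.prod.norm := by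
  rcases l with _ | ⟨x, l⟩
  · simp
  · have hx := hl x List.mem_cons_self
    exact le_of_add_le_right (hS.cancellation_prod (List.forall_mem_cons.2 ⟨hx, hl⟩)
      (List.isChain_cons_cons.2 ⟨hS.mul_self_ne_one hx, hchain⟩)).2

theorem mem_of_norm_eq_one (hS : IsWeaklyNielsenReduced S) {x : FreeGroup α}
    (hx : x ∈ Subgroup.closure S) (hnorm : x.norm = 1) : x ∈ S ∪ S⁻¹ := by
  obtain ⟨l, hl, hchain, rfl⟩ := exists_reduced_list_of_mem_closure hx
  have hlen := hS.length_le_norm_prod hl hchain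
  rcases l with _ | ⟨y, _ | ⟨z, l⟩⟩
  · simp at hnorm
  · simpa using hl
  · rw [hnorm] at hlen
    simp at hlen

end IsWeaklyNielsenReduced

end WeaklyNielsenReduced

section NielsenEquiv

variable {G : Type*} [Group G]

/-- `NielsenEquiv p q` says that the pair `q` is obtained from the pair `p` by Nielsen moves and
simultaneous conjugations. These moves are invertible, so the relation is symmetric. On generating
pairs a simultaneous conjugation is itself a composite of Nielsen moves. -/
inductive NielsenEquiv (p : G × G) : G × G → Prop
  | refl : NielsenEquiv p p
  | swap {u v : G} : NielsenEquiv p (u, v) → NielsenEquiv p (v, u)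
  | inv {u v : G} : NielsenEquiv p (u, v) → NielsenEquiv p (u⁻¹, v)
  | mul {u v : G} : NielsenEquiv p (u, v) → NielsenEquiv p (u, u * v)
  | conj {u v : G} (g : G) : NielsenEquiv p (u, v) → NielsenEquiv p (g * u * g⁻¹, g * v * g⁻¹)

namespace NielsenEquiv

variable {p q : G × G}

theorem mul_left {u v : G} (h : NielsenEquiv p (u, v)) : NielsenEquiv p (u * v, v) := by
  simpa using h.inv.swap.inv.mul.swap.inv.swap.inv.swap

theorem closure_eq_top (h : NielsenEquiv p q) (hp : Subgroup.closure {p.1, p.2} = ⊤) :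
    Subgroup.closure {q.1, q.2} = ⊤ := by
  induction h with
  | refl => exact hp
  | swap _ ih => rwa [Set.pair_comm]
  | @inv u v _ ih =>
    rw [eq_top_iff, ← ih, Subgroup.closure_le, Set.pair_subset_iff]
    have hu : u⁻¹ ∈ Subgroup.closure {u⁻¹, v} := Subgroup.subset_closure (by simp)
    exact ⟨by simpa using hu, Subgroup.subset_closure (by simp)⟩
  | @mul u v _ ih =>
    rw [eq_top_iff, ← ih, Subgroup.closure_le, Set.pair_subset_iff]
    have hu : u ∈ Subgroup.closure {u, u * v} := Subgroup.subset_closure (by simp)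
    have huv : u * v ∈ Subgroup.closure {u, u * v} := Subgroup.subset_closure (by simp)
    exact ⟨hu, (Subgroup.mul_mem_cancel_left _ hu).1 huv⟩
  | @conj u v g _ ih =>
    exact closure_pair_map_eq_top (f := (MulAut.conj g).toMonoidHom) (MulAut.conj g).surjective ih

theorem isConj_commutator (h : NielsenEquiv p q) :
    IsConj ⁅p.1⁻¹, p.2⁻¹⁆ ⁅q.1⁻¹, q.2⁻¹⁆ ∨ IsConj ⁅p.1⁻¹, p.2⁻¹⁆ ⁅q.1⁻¹, q.2⁻¹⁆⁻¹ := by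
  induction h with
  | refl => exact Or.inl (IsConj.refl _)
  | swap _ ih => simpa [commutatorElement_inv] using ih.symm
  | @inv u v _ ih =>
    have hconj : IsConj ⁅u⁻¹, v⁻¹⁆⁻¹ ⁅u⁻¹⁻¹, v⁻¹⁆ :=
      isConj_iff.2 ⟨u, by simp only [commutatorElement_def]; group⟩
    have hconj' : IsConj ⁅u⁻¹, v⁻¹⁆ ⁅u⁻¹⁻¹, v⁻¹⁆⁻¹ :=
      isConj_iff.2 ⟨u, by simp only [commutatorElement_def]; group⟩
    exact ih.symm.imp (·.trans hconj) (·.trans hconj')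
  | @mul u v _ ih =>
    have heq : ⁅u⁻¹, (u * v)⁻¹⁆ = ⁅u⁻¹, v⁻¹⁆ := by
      simp only [commutatorElement_def]
      group
    simpa only [heq] using ih
  | @conj u v g _ ih =>
    have hconj : IsConj ⁅u⁻¹, v⁻¹⁆ ⁅(g * u * g⁻¹)⁻¹, (g * v * g⁻¹)⁻¹⁆ :=
      isConj_iff.2 ⟨g, by simp only [commutatorElement_def]; group⟩
    have hconj' : IsConj ⁅u⁻¹, v⁻¹⁆⁻¹ ⁅(g * u * g⁻¹)⁻¹, (g * v * g⁻¹)⁻¹⁆⁻¹ :=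
      isConj_iff.2 ⟨g, by simp only [commutatorElement_def]; group⟩
    exact ih.imp (·.trans hconj) (·.trans hconj')

end NielsenEquiv

theorem not_commute_of_closure_pair_eq_top {u v a b : G}
    (h : Subgroup.closure {u, v} = ⊤) (hab : ¬ Commute a b) : ¬ Commute u v := by
  intro huv
  have hcomm : ∀ x ∈ ({u, v} : Set G), ∀ y ∈ ({u, v} : Set G), x * y = y * x := by
    rintro x (rfl | rfl) y (rfl | rfl)
    exacts [rfl, huv, huv.symm, rfl]
  have := Subgroup.isMulCommutative_closure hcomm
  exact hab (setLike_mul_comm (s := Subgroup.closure {u, v}) (h ▸ Subgroup.mem_top a)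
    (h ▸ Subgroup.mem_top b))

end NielsenEquiv

section NielsenMinimal

variable {α : Type*} [DecidableEq α] {p : FreeGroup α × FreeGroup α} {u v : FreeGroup α}

/-- The pair `q` has least total word length among the pairs Nielsen equivalent to `p`. -/
structure IsNielsenMinimal (p q : FreeGroup α × FreeGroup α) : Prop where
  nielsenEquiv : NielsenEquiv p q
  norm_add_norm_le : ∀ {r}, NielsenEquiv p r → q.1.norm + q.2.norm ≤ r.1.norm + r.2.norm

theorem exists_isNielsenMinimal (p : FreeGroup α × FreeGroup α) : ∃ q, IsNielsenMinimal p q := by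
  obtain ⟨q, hq⟩ := exists_minimalFor_of_wellFoundedLT (NielsenEquiv p)
    (fun r ↦ r.1.norm + r.2.norm) ⟨p, .refl⟩
  exact ⟨q, hq.prop, fun hr ↦ not_lt.1 (hq.not_prop_of_lt · hr)⟩

namespace IsNielsenMinimal

theorem swap (h : IsNielsenMinimal p (u, v)) : IsNielsenMinimal p (v, u) :=
  ⟨h.nielsenEquiv.swap, fun hr ↦ (Nat.add_comm _ _).trans_le (h.norm_add_norm_le hr)⟩

theorem inv (h : IsNielsenMinimal p (u, v)) : IsNielsenMinimal p (u⁻¹, v) :=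
  ⟨h.nielsenEquiv.inv, fun hr ↦ by simpa only [norm_inv_eq] using h.norm_add_norm_le hr⟩

theorem two_mul_cancellation_le (h : IsNielsenMinimal p (u, v)) :
    2 * cancellation u v ≤ u.norm ∧ 2 * cancellation u v ≤ v.norm := by
  have hmul := h.norm_add_norm_le h.nielsenEquiv.mul
  have hmul_left := h.norm_add_norm_le h.nielsenEquiv.mul_left
  have hnorm := norm_mul_add_two_mul_cancellation u v
  dsimp only at hmul hmul_left
  omega

end IsNielsenMinimal

-- Here `u` starts with `q⁻¹` and ends with `p⁻¹`, and these two pieces do not overlap.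
theorem norm_mul_mul_add_two_mul_le {p q : FreeGroup α} {k : ℕ} (hp : p.norm = k)
    (hq : q.norm = k) (hpq : (p * q).norm = 2 * k) (hu : 2 * k ≤ u.norm)
    (hleft : k ≤ cancellation u (p * q)) (hright : k ≤ cancellation (p * q) u) :
    (q * (u * p)).norm + 2 * k ≤ u.norm := by
  have hup : k ≤ cancellation u p := by
    have hnorm := norm_mul_add_two_mul_cancellation (p * q)⁻¹ p
    have hmin := min_cancellation_le u (p * q) p
    rw [show (p * q)⁻¹ * p = q⁻¹ by group, norm_inv_eq, norm_inv_eq] at hnorm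
    omega
  have hqu : k ≤ cancellation q u := by
    have hnorm := norm_mul_add_two_mul_cancellation q (p * q)⁻¹
    have hmin := min_cancellation_le q (p * q)⁻¹ u
    rw [show q * (p * q)⁻¹ = p⁻¹ by group, norm_inv_eq, norm_inv_eq] at hnorm
    rw [inv_inv] at hmin
    omega
  have hnorm_up := norm_mul_add_two_mul_cancellation u p
  have hqup : k ≤ cancellation q (u * p) := by
    have hsurvive := cancellation_inv_mul_add_cancellation u p
    have htriangle := norm_mul_le (u * p) p⁻¹
    have hmin := min_cancellation_le q u (u * p)
    rw [mul_inv_cancel_right, norm_inv_eq] at htriangle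
    omega
  have hnorm_qup := norm_mul_add_two_mul_cancellation q (u * p)
  omega

namespace IsNielsenMinimal

-- If `v` is absorbed in `u * v * u`, its two halves `r` and `s` are the cancelled pieces, and
-- conjugating `(u * v, v)` by `s` gives the shorter pair `(s * u * r, s * r)`.
theorem cancellation_add_cancellation_lt (h : IsNielsenMinimal p (u, v)) (hv : v ≠ 1) :
    cancellation u v + cancellation v u < v.norm := by
  by_contra! habsorbed
  have huv := h.two_mul_cancellation_le
  have hvu := h.swap.two_mul_cancellation_le
  have hpos : v.norm ≠ 0 := mt norm_eq_zero.1 hv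
  obtain ⟨r, s, rfl, hr, hs⟩ := exists_eq_mul_of_le_norm (x := v) (k := cancellation u v) (by omega)
  have hshort := norm_mul_mul_add_two_mul_le hr (by omega) (by omega) huv.1 le_rfl (by omega)
  have hmin := h.norm_add_norm_le (h.nielsenEquiv.mul_left.conj s)
  rw [show s * (u * (r * s)) * s⁻¹ = s * (u * r) by group,
    show s * (r * s) * s⁻¹ = s * r by group] at hmin
  have hsr := norm_mul_le s r
  dsimp only at hmin
  omega

theorem cancellation_add_cancellation_inv_lt (h : IsNielsenMinimal p (u, v)) (hv : v ≠ 1) :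
    cancellation u v + cancellation v u⁻¹ < v.norm := by
  have huv := h.two_mul_cancellation_le
  have hvu := h.inv.swap.two_mul_cancellation_le
  have hself := two_mul_cancellation_self_lt_norm hv
  have hmin := min_cancellation_le v u⁻¹ v
  rw [inv_inv] at hmin
  omega

theorem exists_partner (h : IsNielsenMinimal p (u, v)) {y : FreeGroup α}
    (hy : y ∈ ({u, v} : Set (FreeGroup α)) ∪ {u, v}⁻¹) :
    ∃ x, IsNielsenMinimal p (x, y) ∧
      ∀ z ∈ ({u, v} : Set (FreeGroup α)) ∪ {u, v}⁻¹, z = y ∨ z = y⁻¹ ∨ z = x ∨ z = x⁻¹ := by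
  simp only [Set.inv_insert, Set.inv_singleton, Set.mem_union, Set.mem_insert_iff,
    Set.mem_singleton_iff] at hy ⊢
  rcases hy with (rfl | rfl) | rfl | rfl
  exacts [⟨v, h.swap, by grind⟩, ⟨u, h, by grind⟩, ⟨v, h.inv.swap, by grind [inv_inv]⟩,
    ⟨u, h.swap.inv.swap, by grind [inv_inv]⟩]

theorem isWeaklyNielsenReduced (h : IsNielsenMinimal p (u, v)) (hu : u ≠ 1) (hv : v ≠ 1) :
    IsWeaklyNielsenReduced {u, v} := by
  refine ⟨by simp [hu.symm, hv.symm], fun x hx y hy z hz hxy hyz ↦ ?_⟩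
  have hy_ne : y ≠ 1 := by
    rintro rfl
    simp [hu, hv, hu.symm, hv.symm] at hy
  obtain ⟨w, hw, hpartner⟩ := h.exists_partner hy
  have hself := two_mul_cancellation_self_lt_norm hy_ne
  have hwy := hw.two_mul_cancellation_le
  have hwy' := hw.inv.two_mul_cancellation_le
  have hyw := hw.swap.two_mul_cancellation_le
  have hyw' := hw.inv.swap.two_mul_cancellation_le
  have hw_w := hw.cancellation_add_cancellation_lt hy_ne
  have hw'_w' := hw.inv.cancellation_add_cancellation_lt hy_ne
  have hw_w' := hw.cancellation_add_cancellation_inv_lt hy_ne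
  have hw'_w := hw.inv.cancellation_add_cancellation_inv_lt hy_ne
  rw [inv_inv] at hw'_w
  rcases hpartner x hx with rfl | rfl | rfl | rfl <;>
    rcases hpartner z hz with rfl | rfl | rfl | rfl <;>
    first | omega | simp at hxy hyz

end IsNielsenMinimal

end NielsenMinimal

theorem closure_genA_genB : Subgroup.closure {genA, genB} = ⊤ := by
  rw [← closure_range_of]
  congr 1
  ext x
  simp [genA, genB, Fin.exists_fin_two, eq_comm]

theorem not_commute_genA_genB : ¬ Commute genA genB := by
  unfold Commute SemiconjBy genA genB
  decide

theorem nielsenEquiv_of_closure_eq_top {u v : F₂} (huv : Subgroup.closure {u, v} = ⊤) :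
    NielsenEquiv (u, v) (genA, genB) := by
  obtain ⟨⟨x, y⟩, hmin⟩ := exists_isNielsenMinimal (u, v)
  have hxy : Subgroup.closure {x, y} = ⊤ := hmin.nielsenEquiv.closure_eq_top huv
  have hcomm := not_commute_of_closure_pair_eq_top hxy not_commute_genA_genB
  have hx : x ≠ 1 := fun hx ↦ hcomm (hx ▸ Commute.one_left y)
  have hy : y ≠ 1 := fun hy ↦ hcomm (hy ▸ Commute.one_right x)
  have hred := hmin.isWeaklyNielsenReduced hx hy
  have ha := hred.mem_of_norm_eq_one (hxy ▸ Subgroup.mem_top genA) (norm_of 0)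
  have hb := hred.mem_of_norm_eq_one (hxy ▸ Subgroup.mem_top genB) (norm_of 1)
  obtain ⟨w, hw, hpartner⟩ := hmin.exists_partner ha
  rcases hpartner genB hb with hba | hba | rfl | hbw
  · exact absurd (hba ▸ Commute.refl genA) not_commute_genA_genB
  · exact absurd (hba ▸ (Commute.refl genA).inv_right) not_commute_genA_genB
  · exact hw.nielsenEquiv.swap
  · exact hbw ▸ hw.nielsenEquiv.inv.swap

/-- Every automorphism `θ` of the free group on two generators `a, b` sends the commutator
`[a,b] = a⁻¹b⁻¹ab` to a conjugate of `[a,b]` or of `[a,b]⁻¹`. -/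
theorem aut_commutator_conjugate (θ : MulAut F₂) :
    ∃ h : F₂,
      θ (genA⁻¹ * genB⁻¹ * genA * genB) =
          h⁻¹ * (genA⁻¹ * genB⁻¹ * genA * genB) * h ∨
      θ (genA⁻¹ * genB⁻¹ * genA * genB) =
          h⁻¹ * (genA⁻¹ * genB⁻¹ * genA * genB)⁻¹ * h := by
  have hgenθ : Subgroup.closure {θ genA, θ genB} = ⊤ :=
    closure_pair_map_eq_top (f := θ.toMonoidHom) θ.surjective closure_genA_genB
  have hconj := (nielsenEquiv_of_closure_eq_top hgenθ).isConj_commutator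
  simp only [isConj_iff, commutatorElement_def, inv_inv] at hconj
  simp only [_root_.map_mul, _root_.map_inv]
  rcases hconj with ⟨h, hh⟩ | ⟨h, hh⟩
  · exact ⟨h, Or.inl (by rw [← hh]; group)⟩
  · exact ⟨h, Or.inr (by rw [← hh]; group)⟩
end

section
/- Let A ∈ SL(2,ℤ) and suppose A = 1 + N for some nonzero 2×2 integer matrix N with N² = 0. Then there exist an integer α and B ∈ SL(2,ℤ) such that B⁻¹·A·B is the matrix with rows (1, α) and (0, 1). (Equivalently, every nonzero 2×2 integer matrix N with N² = 0 is conjugate by an element of SL(2,ℤ) to the matrix with rows (0, α) and (0, 0) for some integer α.) -/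
/-!
Since `N² = 0`, the matrix `N = A - 1` is singular, so `A` fixes a nonzero vector. Dividing out the
gcd of its entries gives a fixed vector with coprime entries, which is the first column of some
`B ∈ SL(2)`. Then `B⁻¹ * A * B` fixes the first basis vector, so its first column is `(1, 0)`, and
its determinant `1` forces the remaining diagonal entry to be `1`.
-/

open Matrix
open scoped MatrixGroups

section Bezout

variable {R : Type*} [CommRing R] [IsDomain R] [IsBezout R]

lemma exists_eq_smul_isCoprime (v : Fin 2 → R) :
    ∃ (g : R) (w : Fin 2 → R), v = g • w ∧ IsCoprime (w 0) (w 1) := by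
  classical
  let := IsBezout.toGCDDomain R
  obtain ⟨x, y, hx, hy, hxy⟩ := extract_gcd (v 0) (v 1)
  refine ⟨gcd (v 0) (v 1), ![x, y], ?_, (gcd_isUnit_iff x y).mp hxy⟩
  ext i
  fin_cases i
  exacts [hx, hy]

lemma exists_isCoprime_mulVec_eq_zero {M : Matrix (Fin 2) (Fin 2) R} (hM : M.det = 0) :
    ∃ w : Fin 2 → R, IsCoprime (w 0) (w 1) ∧ M *ᵥ w = 0 := by
  obtain ⟨v, hv, hMv⟩ := exists_mulVec_eq_zero_iff.mpr hM
  obtain ⟨g, w, rfl, hw⟩ := exists_eq_smul_isCoprime v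
  rw [mulVec_smul] at hMv
  exact ⟨w, hw, (smul_eq_zero.mp hMv).resolve_left (left_ne_zero_of_smul hv)⟩

lemma exists_isCoprime_SL2_smul_eq_self {A : SL(2, R)}
    (hA : ((A : Matrix (Fin 2) (Fin 2) R) - 1).det = 0) :
    ∃ w : Fin 2 → R, IsCoprime (w 0) (w 1) ∧ A • w = w := by
  obtain ⟨w, hw, hAw⟩ := exists_isCoprime_mulVec_eq_zero hA
  rw [sub_mulVec, one_mulVec, sub_eq_zero] at hAw
  exact ⟨w, hw, hAw⟩

end Bezout

section CommRing

variable {R : Type*} [CommRing R]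

lemma SL_smul_single_one {n : Type*} [Fintype n] [DecidableEq n]
    (A : Matrix.SpecialLinearGroup n R) (j : n) :
    A • (Pi.single j 1 : n → R) = (A : Matrix n n R).col j :=
  mulVec_single_one (A : Matrix n n R) j

lemma exists_SL2_smul_single_eq {w : Fin 2 → R} (hw : IsCoprime (w 0) (w 1)) :
    ∃ B : SL(2, R), B • (Pi.single 0 1 : Fin 2 → R) = w := by
  obtain ⟨B, h₀, h₁⟩ := hw.exists_SL2_col 0
  refine ⟨B, ?_⟩
  rw [SL_smul_single_one]
  ext i
  fin_cases i
  exacts [h₀, h₁]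

lemma SL2_eq_of_smul_single_eq_self {C : SL(2, R)}
    (hC : C • (Pi.single 0 1 : Fin 2 → R) = Pi.single 0 1) :
    (C : Matrix (Fin 2) (Fin 2) R) = !![1, C 0 1; 0, 1] := by
  rw [SL_smul_single_one] at hC
  have h₀₀ : C 0 0 = 1 := congrFun hC 0
  have h₁₀ : C 1 0 = 0 := congrFun hC 1
  have h₁₁ : C 1 1 = 1 := by
    have hdet := C.det_coe
    rwa [det_fin_two, h₀₀, h₁₀, one_mul, mul_zero, sub_zero] at hdet
  calc (C : Matrix (Fin 2) (Fin 2) R) = !![C 0 0, C 0 1; C 1 0, C 1 1] := eta_fin_two _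
    _ = !![1, C 0 1; 0, 1] := by rw [h₀₀, h₁₀, h₁₁]

end CommRing

theorem sl2_one_add_nilpotent_conjugate_unipotent_general {R : Type*} [CommRing R] [IsDomain R]
    [IsBezout R] (A : SL(2, R)) (hA : ((A : Matrix (Fin 2) (Fin 2) R) - 1).det = 0) :
    ∃ (α : R) (B : SL(2, R)),
      ((B⁻¹ * A * B : SL(2, R)) : Matrix (Fin 2) (Fin 2) R) = !![1, α; 0, 1] := by
  obtain ⟨w, hw, hAw⟩ := exists_isCoprime_SL2_smul_eq_self hA
  obtain ⟨B, hB⟩ := exists_SL2_smul_single_eq hw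
  have hfix : (B⁻¹ * A * B) • (Pi.single 0 1 : Fin 2 → R) = Pi.single 0 1 := by
    rw [mul_smul, mul_smul, hB, hAw, inv_smul_eq_iff, hB]
  exact ⟨_, B, SL2_eq_of_smul_single_eq_self hfix⟩

/-- If `A ∈ SL(2,ℤ)` equals `1 + N` for some nonzero integer matrix `N` with `N² = 0`,
then `A` is conjugate in `SL(2,ℤ)` to `!![1, α; 0, 1]` for some integer `α`. -/
theorem sl2_one_add_nilpotent_conjugate_unipotent
    (A : Matrix.SpecialLinearGroup (Fin 2) ℤ) (N : Matrix (Fin 2) (Fin 2) ℤ)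
    (hN0 : N ≠ 0) (hN2 : N ^ 2 = 0)
    (hAN : (A : Matrix (Fin 2) (Fin 2) ℤ) = 1 + N) :
    ∃ (α : ℤ) (B : Matrix.SpecialLinearGroup (Fin 2) ℤ),
      ((B⁻¹ * A * B : Matrix.SpecialLinearGroup (Fin 2) ℤ) : Matrix (Fin 2) (Fin 2) ℤ) =
        !![1, α; 0, 1] := by
  have hN : N.det = 0 := eq_zero_of_pow_eq_zero (n := 2) (by simp [← det_pow, hN2])
  exact sl2_one_add_nilpotent_conjugate_unipotent_general A (by rwa [hAN, add_sub_cancel_left])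
end
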